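/- For all integers k ≥ 1 and 1 ≤ j ≤ k, the number of noncrossing pair partitions of {1,...,2k} having exactly j right legs at even positions equals the Narayana number (1/k)·C(k, j)·C(k, j−1); equivalently, k times this count equals C(k, j)·C(k, j−1). (This is the case p = 1 of the enumeration of adapted noncrossing pair partitions by right-leg statistics.) -/

import Mathlib

/-- `π` is a noncrossing pair partition of `{1, …, m}`, encoded as the finite set of
its blocks, each block written as an ordered pair `(a, b)` with `a < b`:
all entries lie in `{1, …, m}`, every point of `{1, …, m}` is covered, distinct
blocks are disjoint, and no two blocks cross. -/
def IsNCPP (m : ℕ) (π : Finset (ℕ × ℕ)) : Prop :=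
  (∀ b ∈ π, 1 ≤ b.1 ∧ b.2 ≤ m ∧ b.1 < b.2) ∧
  (∀ x, 1 ≤ x → x ≤ m → ∃ b ∈ π, x = b.1 ∨ x = b.2) ∧
  (∀ b ∈ π, ∀ c ∈ π, (b.1 = c.1 ∨ b.1 = c.2 ∨ b.2 = c.1 ∨ b.2 = c.2) → b = c) ∧
  (∀ b ∈ π, ∀ c ∈ π, ¬(b.1 < c.1 ∧ c.1 < b.2 ∧ b.2 < c.2))

open Classical in
/-- The finset of all noncrossing pair partitions of `{1, …, m}`. -/
noncomputable def NCPPset (m : ℕ) : Finset (Finset (ℕ × ℕ)) :=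
  (Finset.Icc 1 m ×ˢ Finset.Icc 1 m).powerset.filter (IsNCPP m)

/-!
A noncrossing pair partition is built by revealing its points from left to right: a new point either
stays open or is paired with the last open point, the only choice that keeps the pairing noncrossing
and leaves no open point trapped under a block. Hence the number of partial noncrossing pairings of
`{1, …, m}` with `a` even and `b` odd right legs satisfies a Pascal recursion, in `a` when the new
point is even and in `b` when it is odd. Its solution is the `2 × 2` determinant
`C(N, a) C(n, b) - C(N, a - 1) C(n, b - 1)`, where `N` and `n` are the numbers of even and odd
positions that can be right legs. A pairing of `{1, …, 2k}` is complete exactly when `a + b = k`,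
and then the determinant, with `N = k` and `n = k - 1`, is a Narayana number.
-/

open Finset

section Binomials

variable {n a b i : ℕ}

/-- The binomial coefficient `C(n, r - 1)`, with value `0` at `r = 0`, where the truncated
subtraction in `n.choose (r - 1)` would give `1`. -/
def choosePred (n : ℕ) : ℕ → ℕ
  | 0 => 0
  | r + 1 => n.choose r

theorem choose_succ_left_eq_add_choosePred (n r : ℕ) :
    (n + 1).choose r = n.choose r + choosePred n r := by
  cases r with
  | zero => simp [choosePred]
  | succ r => rw [Nat.choose_succ_succ', choosePred, add_comm]

theorem choosePred_eq_choose_of_add_eq_succ (h : a + b = n + 1) :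
    choosePred n b = n.choose a := by
  cases b with
  | zero => rw [choosePred, Nat.choose_eq_zero_of_lt (by omega)]
  | succ b => exact Nat.choose_symm_of_eq_add (by omega)

/-- The determinant `C(N, a) C(n, b) - C(N, a - 1) C(n, b - 1)`, which counts the pairs of
nonintersecting lattice paths encoding the even and the odd right legs. -/
def chooseDet (N n a b : ℕ) : ℤ :=
  N.choose a * n.choose b - choosePred N a * choosePred n b

theorem chooseDet_eq_zero (h : a + b = n + 1) : chooseDet n n a b = 0 := by
  rw [chooseDet, choosePred_eq_choose_of_add_eq_succ h,
    choosePred_eq_choose_of_add_eq_succ ((add_comm b a).trans h)]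
  ring

theorem chooseDet_succ_zero_left (N n b : ℕ) : chooseDet (N + 1) n 0 b = chooseDet N n 0 b := by
  simp [chooseDet, choosePred]

theorem chooseDet_succ_succ_left (N n a b : ℕ) :
    chooseDet (N + 1) n (a + 1) b = chooseDet N n (a + 1) b + chooseDet N n a b := by
  simp only [chooseDet, choosePred, choose_succ_left_eq_add_choosePred]
  push_cast
  ring

theorem chooseDet_comm (N n a b : ℕ) : chooseDet N n a b = chooseDet n N b a := by
  rw [chooseDet, chooseDet]
  ring

theorem succ_mul_chooseDet_eq_choose_mul_choose (h : a + i = n) :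
    ((n + 1 : ℕ) : ℤ) * chooseDet (n + 1) n (i + 1) a =
      (n + 1).choose (i + 1) * (n + 1).choose i := by
  have hpred : choosePred n a = n.choose (i + 1) :=
    choosePred_eq_choose_of_add_eq_succ (by omega)
  have hsymm : n.choose a = n.choose i := Nat.choose_symm_of_eq_add h.symm
  rw [chooseDet, hpred, hsymm, choosePred]
  have hlower : (n + 1) * n.choose i = (n + 1).choose (i + 1) * (i + 1) :=
    Nat.add_one_mul_choose_eq n i
  have hupper : n.choose (i + 1) * (n + 1) = (n + 1).choose (i + 1) * a := by
    rw [Nat.choose_mul_succ_eq, show n + 1 - (i + 1) = a by omega]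
  have hratio : (n + 1).choose (i + 1) * (i + 1) = (n + 1).choose i * (a + 1) := by
    rw [Nat.choose_succ_right_eq, show n + 1 - i = a + 1 by omega]
  zify at hlower hupper hratio ⊢
  linear_combination ((n + 1).choose (i + 1) : ℤ) * hlower - ((n + 1).choose i : ℤ) * hupper +
    ((n + 1).choose (i + 1) : ℤ) * hratio

end Binomials

section Pairings

/-- The set of points covered by the blocks of `π`. -/
def endpoints (π : Finset (ℕ × ℕ)) : Finset ℕ :=
  π.biUnion fun b => {b.1, b.2}

/-- The points of `{1, …, m}` not covered by `π`, which are still available for pairing. -/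
def openPoints (m : ℕ) (π : Finset (ℕ × ℕ)) : Finset ℕ :=
  Icc 1 m \ endpoints π

/-- Partial noncrossing pairings of `{1, …, m}`: points may be left uncovered, but none underneath
a block. These are the restrictions of noncrossing pair partitions to an initial segment. -/
structure IsPartialNCPP (m : ℕ) (π : Finset (ℕ × ℕ)) : Prop where
  bounds : ∀ b ∈ π, 1 ≤ b.1 ∧ b.2 ≤ m ∧ b.1 < b.2
  eq_of_common_endpoint :
    ∀ b ∈ π, ∀ c ∈ π, (b.1 = c.1 ∨ b.1 = c.2 ∨ b.2 = c.1 ∨ b.2 = c.2) → b = c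
  noncrossing : ∀ b ∈ π, ∀ c ∈ π, ¬(b.1 < c.1 ∧ c.1 < b.2 ∧ b.2 < c.2)
  covered_under : ∀ b ∈ π, ∀ x, b.1 < x → x < b.2 → x ∈ endpoints π

/-- The blocks of `π` contained in `{1, …, m}`, as their right leg is at most `m`. -/
def restrictTo (m : ℕ) (π : Finset (ℕ × ℕ)) : Finset (ℕ × ℕ) :=
  π.filter fun b => b.2 ≤ m

/-- Pairs the new point `m + 1` with the last open point, the only partner that creates no
crossing and leaves no open point underneath. Meaningful only if there is an open point: otherwise
the supremum takes its junk value `0`. -/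
def closeLast (m : ℕ) (π : Finset (ℕ × ℕ)) : Finset (ℕ × ℕ) :=
  insert ((openPoints m π).sup id, m + 1) π

variable {m n x : ℕ} {π : Finset (ℕ × ℕ)}

theorem mem_endpoints : x ∈ endpoints π ↔ ∃ b ∈ π, x = b.1 ∨ x = b.2 := by
  simp [endpoints]

theorem mem_openPoints : x ∈ openPoints m π ↔ (1 ≤ x ∧ x ≤ m) ∧ x ∉ endpoints π := by
  simp [openPoints]

theorem mem_restrictTo {b : ℕ × ℕ} : b ∈ restrictTo m π ↔ b ∈ π ∧ b.2 ≤ m := by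
  simp [restrictTo]

theorem succ_mem_endpoints_closeLast : m + 1 ∈ endpoints (closeLast m π) :=
  mem_endpoints.2 ⟨_, mem_insert_self _ _, .inr rfl⟩

theorem isGreatest_sup_id {s : Finset ℕ} (hs : s.Nonempty) :
    IsGreatest (s : Set ℕ) (s.sup id) := by
  obtain ⟨x, hx, hsup⟩ := exists_mem_eq_sup s hs id
  exact ⟨hsup ▸ hx, fun y hy => le_sup (f := id) hy⟩

namespace IsPartialNCPP

theorem empty (m : ℕ) : IsPartialNCPP m ∅ := by
  constructor <;> simp

theorem mono (h : IsPartialNCPP m π) (hmn : m ≤ n) : IsPartialNCPP n π where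
  __ := h
  bounds b hb := by have := h.bounds b hb; omega

theorem subset_Icc_product_Icc (h : IsPartialNCPP m π) : π ⊆ Icc 1 m ×ˢ Icc 1 m := by
  intro b hb
  have := h.bounds b hb
  simp only [mem_product, mem_Icc]
  omega

theorem mk_succ_notMem (h : IsPartialNCPP m π) : (x, m + 1) ∉ π := fun hx => by
  have := h.bounds _ hx
  omega

theorem le_of_mem_endpoints (h : IsPartialNCPP m π) (hx : x ∈ endpoints π) : 1 ≤ x ∧ x ≤ m := by
  obtain ⟨b, hb, hxb⟩ := mem_endpoints.1 hx
  have := h.bounds b hb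
  omega

theorem card_endpoints (h : IsPartialNCPP m π) : #(endpoints π) = 2 * #π := by
  rw [endpoints, card_biUnion,
    sum_const_nat fun b hb => card_pair (h.bounds b hb).2.2.ne, mul_comm]
  intro b hb c hc hbc
  have := mt (h.eq_of_common_endpoint b hb c hc) hbc
  simp only [disjoint_insert_left, disjoint_singleton_left, mem_insert, mem_singleton]
  tauto

theorem card_openPoints_add (h : IsPartialNCPP m π) : #(openPoints m π) + 2 * #π = m := by
  have hsub : endpoints π ⊆ Icc 1 m := fun x hx => mem_Icc.2 (h.le_of_mem_endpoints hx)
  simpa [openPoints, h.card_endpoints] using card_sdiff_add_card_eq_card hsub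

theorem openPoints_nonempty_iff (h : IsPartialNCPP m π) :
    (openPoints m π).Nonempty ↔ 2 * #π < m := by
  have := h.card_openPoints_add
  rw [← card_pos]
  omega

protected theorem restrictTo (h : IsPartialNCPP m π) (n : ℕ) :
    IsPartialNCPP n (restrictTo n π) where
  bounds b hb := by
    have := mem_restrictTo.1 hb
    have := h.bounds b this.1
    omega
  eq_of_common_endpoint b hb c hc :=
    h.eq_of_common_endpoint b (mem_restrictTo.1 hb).1 c (mem_restrictTo.1 hc).1
  noncrossing b hb c hc := h.noncrossing b (mem_restrictTo.1 hb).1 c (mem_restrictTo.1 hc).1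
  covered_under b hb x hbx hxb := by
    obtain ⟨hb, hbn⟩ := mem_restrictTo.1 hb
    obtain ⟨c, hc, hxc⟩ := mem_endpoints.1 (h.covered_under b hb x hbx hxb)
    -- The block `c` through `x` cannot cross `b`, so it ends before `b` does.
    have hcn : c.2 ≤ n := by
      have := h.noncrossing b hb c hc
      have := h.bounds c hc
      omega
    exact mem_endpoints.2 ⟨c, mem_restrictTo.2 ⟨hc, hcn⟩, hxc⟩

theorem restrictTo_eq_self (h : IsPartialNCPP (m + 1) π) (hm : m + 1 ∉ endpoints π) :
    restrictTo m π = π := by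
  refine filter_true_of_mem fun b hb => ?_
  have hne : m + 1 ≠ b.2 := fun hmb => hm (mem_endpoints.2 ⟨b, hb, .inr hmb⟩)
  have := h.bounds b hb
  omega

theorem succ_and_notMem_endpoints_iff :
    IsPartialNCPP (m + 1) π ∧ m + 1 ∉ endpoints π ↔ IsPartialNCPP m π := by
  constructor
  · rintro ⟨h, hm⟩
    exact h.restrictTo_eq_self hm ▸ h.restrictTo m
  · intro h
    refine ⟨h.mono m.le_succ, fun hm => ?_⟩
    have := h.le_of_mem_endpoints hm
    omega

theorem insert_isGreatest (h : IsPartialNCPP m π)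
    (hx : IsGreatest (openPoints m π : Set ℕ) x) :
    IsPartialNCPP (m + 1) (insert (x, m + 1) π) := by
  obtain ⟨hxm, hxπ⟩ := mem_openPoints.1 (mem_coe.1 hx.1)
  have hnotEnd (b) (hb : b ∈ π) : x ≠ b.1 ∧ x ≠ b.2 :=
    not_or.1 fun hxb => hxπ (mem_endpoints.2 ⟨b, hb, hxb⟩)
  have hnotUnder (b) (hb : b ∈ π) : ¬(b.1 < x ∧ x < b.2) :=
    fun hxb => hxπ (h.covered_under b hb x hxb.1 hxb.2)
  have hsub : endpoints π ⊆ endpoints (insert (x, m + 1) π) :=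
    biUnion_subset_biUnion_of_subset_left _ (subset_insert _ _)
  have hbounds := h.bounds
  constructor
  case bounds => grind
  case eq_of_common_endpoint =>
    have := h.eq_of_common_endpoint
    grind
  case noncrossing =>
    have := h.noncrossing
    grind
  case covered_under =>
    intro b hb y hby hyb
    apply hsub
    rcases mem_insert.1 hb with rfl | hb
    · by_contra hy
      have hyx : y ≤ x := hx.2 (mem_coe.2 (mem_openPoints.2 ⟨by grind, hy⟩))
      exact hyx.not_gt hby
    · exact h.covered_under b hb y hby hyb

theorem isGreatest_openPoints_restrictTo (h : IsPartialNCPP (m + 1) π) (hx : (x, m + 1) ∈ π) :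
    IsGreatest (openPoints m (restrictTo m π) : Set ℕ) x := by
  have hbounds := h.bounds _ hx
  constructor
  · refine mem_openPoints.2 ⟨by grind, fun hxπ => ?_⟩
    obtain ⟨b, hb, hxb⟩ := mem_endpoints.1 hxπ
    obtain ⟨hb, hbm⟩ := mem_restrictTo.1 hb
    have := h.eq_of_common_endpoint b hb _ hx (by grind)
    grind
  · intro y hy
    obtain ⟨hym, hyπ⟩ := mem_openPoints.1 (mem_coe.1 hy)
    by_contra! hxy
    obtain ⟨b, hb, hyb⟩ := mem_endpoints.1 (h.covered_under _ hx y hxy (by grind))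
    have hbm : b.2 ≤ m := by
      have := h.bounds b hb
      have := h.eq_of_common_endpoint b hb _ hx
      grind
    exact hyπ (mem_endpoints.2 ⟨b, mem_restrictTo.2 ⟨hb, hbm⟩, hyb⟩)

theorem exists_mem_of_mem_endpoints (h : IsPartialNCPP m π) (hm : m ∈ endpoints π) :
    ∃ x, (x, m) ∈ π := by
  obtain ⟨⟨x, y⟩, hb, hmb⟩ := mem_endpoints.1 hm
  have := h.bounds _ hb
  obtain rfl : m = y := by grind
  exact ⟨x, hb⟩

protected theorem closeLast (h : IsPartialNCPP m π) (hopen : (openPoints m π).Nonempty) :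
    IsPartialNCPP (m + 1) (closeLast m π) :=
  h.insert_isGreatest (isGreatest_sup_id hopen)

theorem restrictTo_closeLast (h : IsPartialNCPP m π) : restrictTo m (closeLast m π) = π := by
  rw [restrictTo, closeLast, filter_insert, if_neg (by simp)]
  exact filter_true_of_mem fun b hb => (h.bounds b hb).2.1

theorem closeLast_restrictTo (h : IsPartialNCPP (m + 1) π) (hx : (x, m + 1) ∈ π) :
    closeLast m (restrictTo m π) = π := by
  have hgreatest := h.isGreatest_openPoints_restrictTo hx
  have hsup := (isGreatest_sup_id ⟨x, hgreatest.1⟩).unique hgreatest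
  rw [closeLast, hsup]
  have hlast (b) (hb : b ∈ π) (hbm : b.2 = m + 1) : b = (x, m + 1) :=
    h.eq_of_common_endpoint b hb _ hx (by simp [hbm])
  have hbounds := h.bounds
  ext b
  grind [mem_restrictTo]

end IsPartialNCPP

theorem isNCPP_iff : IsNCPP m π ↔ IsPartialNCPP m π ∧ 2 * #π = m := by
  have hcover (h : IsPartialNCPP m π) :
      2 * #π = m ↔ ∀ x, 1 ≤ x → x ≤ m → x ∈ endpoints π := by
    have hcard := h.card_openPoints_add
    have hopen : openPoints m π = ∅ ↔ ∀ x, 1 ≤ x → x ≤ m → x ∈ endpoints π := by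
      simp [openPoints, sdiff_eq_empty_iff_subset, subset_iff]
    rw [← hopen, ← card_eq_zero]
    omega
  constructor
  · rintro ⟨hbounds, hcovered, heq, hnc⟩
    have hcovered (x) (h1 : 1 ≤ x) (hm : x ≤ m) := mem_endpoints.2 (hcovered x h1 hm)
    have h : IsPartialNCPP m π := ⟨hbounds, heq, hnc, fun b hb x hbx hxb =>
      have := hbounds b hb
      hcovered x (by omega) (by omega)⟩
    exact ⟨h, (hcover h).2 hcovered⟩
  · rintro ⟨h, hcard⟩
    exact ⟨h.bounds, fun x h1 hm => mem_endpoints.1 ((hcover h).1 hcard x h1 hm),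
      h.eq_of_common_endpoint, h.noncrossing⟩

end Pairings

section Counting

variable {m n a b : ℕ} {π : Finset (ℕ × ℕ)}

/-- The number of right legs at even positions. -/
def evenLegs (π : Finset (ℕ × ℕ)) : ℕ := #{b ∈ π | Even b.2}

/-- The number of right legs at odd positions. -/
def oddLegs (π : Finset (ℕ × ℕ)) : ℕ := #{b ∈ π | ¬Even b.2}

theorem evenLegs_add_oddLegs (π : Finset (ℕ × ℕ)) : evenLegs π + oddLegs π = #π :=
  card_filter_add_card_filter_not _

open Classical in
/-- The finset of all partial noncrossing pairings of `{1, …, m}`. -/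
noncomputable def partialNCPPset (m : ℕ) : Finset (Finset (ℕ × ℕ)) :=
  {π ∈ (Icc 1 m ×ˢ Icc 1 m).powerset | IsPartialNCPP m π}

theorem mem_partialNCPPset : π ∈ partialNCPPset m ↔ IsPartialNCPP m π := by
  simpa [partialNCPPset] using IsPartialNCPP.subset_Icc_product_Icc

theorem mem_NCPPset : π ∈ NCPPset m ↔ IsNCPP m π := by
  simpa [NCPPset] using fun h : IsNCPP m π => (isNCPP_iff.1 h).1.subset_Icc_product_Icc

theorem card_filter_partialNCPPset_succ (m : ℕ) (p : Finset (ℕ × ℕ) → Prop) [DecidablePred p] :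
    #{π ∈ partialNCPPset (m + 1) | p π} = #{π ∈ partialNCPPset m | p π} +
      #{π ∈ partialNCPPset m | (openPoints m π).Nonempty ∧ p (closeLast m π)} := by
  rw [← card_filter_add_card_filter_not (fun π => m + 1 ∉ endpoints π)]
  congr 1
  · congr 1
    ext π
    rw [mem_filter, mem_filter, mem_filter, mem_partialNCPPset, mem_partialNCPPset,
      ← IsPartialNCPP.succ_and_notMem_endpoints_iff (m := m)]
    tauto
  · refine card_nbij' (restrictTo m) (closeLast m) ?_ ?_ ?_ ?_ <;> intro π hπ <;>
      simp only [mem_coe, mem_filter, mem_partialNCPPset, not_not] at hπ ⊢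
    · obtain ⟨⟨h, hp⟩, hm⟩ := hπ
      obtain ⟨x, hx⟩ := h.exists_mem_of_mem_endpoints hm
      rw [h.closeLast_restrictTo hx]
      exact ⟨h.restrictTo m, ⟨x, (h.isGreatest_openPoints_restrictTo hx).1⟩, hp⟩
    · obtain ⟨h, hopen, hp⟩ := hπ
      exact ⟨⟨h.closeLast hopen, hp⟩, succ_mem_endpoints_closeLast⟩
    · obtain ⟨⟨h, -⟩, hm⟩ := hπ
      obtain ⟨x, hx⟩ := h.exists_mem_of_mem_endpoints hm
      exact h.closeLast_restrictTo hx
    · exact hπ.1.restrictTo_closeLast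

theorem evenLegs_closeLast_of_odd (h : IsPartialNCPP m π) (hm : Odd m) :
    evenLegs (closeLast m π) = evenLegs π + 1 := by
  rw [evenLegs, closeLast, filter_insert, if_pos hm.add_one, card_insert_of_notMem, evenLegs]
  exact fun hmem => h.mk_succ_notMem (mem_filter.1 hmem).1

theorem oddLegs_closeLast_of_odd (hm : Odd m) : oddLegs (closeLast m π) = oddLegs π := by
  rw [oddLegs, closeLast, filter_insert, if_neg (not_not_intro hm.add_one), oddLegs]

theorem evenLegs_closeLast_of_even (hm : Even m) : evenLegs (closeLast m π) = evenLegs π := by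
  rw [evenLegs, closeLast, filter_insert, if_neg (Nat.not_even_iff_odd.2 hm.add_one), evenLegs]

theorem oddLegs_closeLast_of_even (h : IsPartialNCPP m π) (hm : Even m) :
    oddLegs (closeLast m π) = oddLegs π + 1 := by
  rw [oddLegs, closeLast, filter_insert, if_pos (Nat.not_even_iff_odd.2 hm.add_one),
    card_insert_of_notMem, oddLegs]
  exact fun hmem => h.mk_succ_notMem (mem_filter.1 hmem).1

/-- The number of partial noncrossing pairings of `{1, …, m}` with `a` even and `b` odd
right legs. -/
noncomputable def numPartialNCPP (m a b : ℕ) : ℕ :=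
  #{π ∈ partialNCPPset m | evenLegs π = a ∧ oddLegs π = b}

theorem numPartialNCPP_zero_zero (m : ℕ) : numPartialNCPP m 0 0 = 1 := by
  refine card_eq_one.2 ⟨∅, ?_⟩
  ext π
  have := evenLegs_add_oddLegs π
  rw [mem_filter, mem_partialNCPPset, mem_singleton, ← card_eq_zero]
  constructor
  · omega
  · intro hπ
    exact ⟨card_eq_zero.1 hπ ▸ .empty m, by omega⟩

theorem numPartialNCPP_eq_zero (h : m < 2 * (a + b)) : numPartialNCPP m a b = 0 := by
  rw [numPartialNCPP, card_eq_zero, filter_eq_empty_iff]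
  rintro π hπ ⟨rfl, rfl⟩
  have := evenLegs_add_oddLegs π
  have := (mem_partialNCPPset.1 hπ).card_openPoints_add
  omega

theorem numPartialNCPP_succ_zero_left (hm : Odd m) :
    numPartialNCPP (m + 1) 0 b = numPartialNCPP m 0 b := by
  rw [numPartialNCPP, card_filter_partialNCPPset_succ, numPartialNCPP, Nat.add_eq_left,
    card_eq_zero, filter_eq_empty_iff]
  rintro π hπ ⟨-, heven, -⟩
  rw [evenLegs_closeLast_of_odd (mem_partialNCPPset.1 hπ) hm] at heven
  omega

theorem numPartialNCPP_succ_succ_left (hm : Odd m) :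
    numPartialNCPP (m + 1) (a + 1) b = numPartialNCPP m (a + 1) b + numPartialNCPP m a b := by
  rw [numPartialNCPP, card_filter_partialNCPPset_succ, numPartialNCPP, numPartialNCPP]
  congr 2
  refine filter_congr fun π hπ => ?_
  have h := mem_partialNCPPset.1 hπ
  have hopen : (openPoints m π).Nonempty := by
    have := h.card_openPoints_add
    rw [h.openPoints_nonempty_iff]
    grind
  rw [evenLegs_closeLast_of_odd h hm, oddLegs_closeLast_of_odd hm]
  simp [hopen]

theorem numPartialNCPP_succ_zero_right (hm : Even m) :
    numPartialNCPP (m + 1) a 0 = numPartialNCPP m a 0 := by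
  rw [numPartialNCPP, card_filter_partialNCPPset_succ, numPartialNCPP, Nat.add_eq_left,
    card_eq_zero, filter_eq_empty_iff]
  rintro π hπ ⟨-, -, hodd⟩
  rw [oddLegs_closeLast_of_even (mem_partialNCPPset.1 hπ) hm] at hodd
  omega

theorem numPartialNCPP_succ_succ_right (hm : Even m) (hab : 2 * (a + b) < m) :
    numPartialNCPP (m + 1) a (b + 1) = numPartialNCPP m a (b + 1) + numPartialNCPP m a b := by
  rw [numPartialNCPP, card_filter_partialNCPPset_succ, numPartialNCPP, numPartialNCPP]
  congr 2
  refine filter_congr fun π hπ => ?_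
  have h := mem_partialNCPPset.1 hπ
  have := evenLegs_add_oddLegs π
  rw [h.openPoints_nonempty_iff, evenLegs_closeLast_of_even hm, oddLegs_closeLast_of_even h hm]
  omega

theorem numPartialNCPP_even_of_odd
    (hodd : ∀ a b, a + b ≤ n + 1 → (numPartialNCPP (2 * n + 1) a b : ℤ) = chooseDet n n a b)
    (hab : a + b ≤ n + 1) :
    (numPartialNCPP (2 * n + 2) a b : ℤ) = chooseDet (n + 1) n a b := by
  have hm : Odd (2 * n + 1) := odd_two_mul_add_one n
  cases a with
  | zero => rw [numPartialNCPP_succ_zero_left hm, chooseDet_succ_zero_left, hodd _ _ hab]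
  | succ a =>
    rw [numPartialNCPP_succ_succ_left hm, chooseDet_succ_succ_left, Nat.cast_add, hodd _ _ hab,
      hodd _ _ (by omega)]

theorem numPartialNCPP_odd_of_even
    (heven : ∀ a b, a + b ≤ n + 1 →
      (numPartialNCPP (2 * n + 2) a b : ℤ) = chooseDet (n + 1) n a b)
    (hab : a + b ≤ n + 2) :
    (numPartialNCPP (2 * n + 3) a b : ℤ) = chooseDet (n + 1) (n + 1) a b := by
  have hm : Even (2 * n + 2) := even_two_mul (n + 1)
  obtain hab | hab := hab.eq_or_lt
  · rw [numPartialNCPP_eq_zero (by omega), chooseDet_eq_zero hab, Nat.cast_zero]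
  rw [chooseDet_comm]
  cases b with
  | zero =>
    rw [numPartialNCPP_succ_zero_right hm, chooseDet_succ_zero_left, chooseDet_comm,
      heven _ _ (by omega)]
  | succ b =>
    rw [numPartialNCPP_succ_succ_right hm (by omega), chooseDet_succ_succ_left, chooseDet_comm n,
      chooseDet_comm n, Nat.cast_add, heven _ _ (by omega), heven _ _ (by omega)]

theorem numPartialNCPP_odd (hab : a + b ≤ n + 1) :
    (numPartialNCPP (2 * n + 1) a b : ℤ) = chooseDet n n a b := by
  induction n generalizing a b with
  | zero =>
    obtain hab | hab := hab.eq_or_lt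
    · rw [numPartialNCPP_eq_zero (by omega), chooseDet_eq_zero hab, Nat.cast_zero]
    · obtain ⟨rfl, rfl⟩ : a = 0 ∧ b = 0 := by omega
      simp [numPartialNCPP_zero_zero, chooseDet, choosePred]
  | succ n ih =>
    exact numPartialNCPP_odd_of_even (fun _ _ => numPartialNCPP_even_of_odd fun _ _ => ih) hab

theorem numPartialNCPP_even (hab : a + b ≤ n + 1) :
    (numPartialNCPP (2 * n + 2) a b : ℤ) = chooseDet (n + 1) n a b :=
  numPartialNCPP_even_of_odd (fun _ _ => numPartialNCPP_odd) hab

theorem card_filter_NCPPset (k j : ℕ) (hjk : j ≤ k) :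
    #{π ∈ NCPPset (2 * k) | evenLegs π = j} = numPartialNCPP (2 * k) j (k - j) := by
  rw [numPartialNCPP]
  congr 1
  ext π
  have := evenLegs_add_oddLegs π
  rw [mem_filter, mem_filter, mem_NCPPset, isNCPP_iff, mem_partialNCPPset, and_assoc]
  refine and_congr_right fun _ => ?_
  omega

end Counting

open Classical in
/-- Narayana enumeration (the case `p = 1`): for `1 ≤ j ≤ k`, `k` times the number
of noncrossing pair partitions of `{1, …, 2k}` having exactly `j` right legs at
even positions equals `C(k, j) · C(k, j − 1)`. -/
theorem card_NCPP_even_right_legs (k j : ℕ) (hk : 1 ≤ k) (hj1 : 1 ≤ j)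
    (hjk : j ≤ k) :
    k * ((NCPPset (2 * k)).filter
        (fun π => (π.filter fun b => Even b.2).card = j)).card =
      Nat.choose k j * Nat.choose k (j - 1) := by
  obtain ⟨n, rfl⟩ := Nat.exists_eq_add_of_le' hk
  obtain ⟨i, rfl⟩ := Nat.exists_eq_add_of_le' hj1
  have hcount : (#{π ∈ NCPPset (2 * (n + 1)) | evenLegs π = i + 1} : ℤ) =
      chooseDet (n + 1) n (i + 1) (n - i) := by
    rw [card_filter_NCPPset _ _ hjk, Nat.add_sub_add_right]
    exact numPartialNCPP_even (by omega)
  have hnarayana := succ_mul_chooseDet_eq_choose_mul_choose (show n - i + i = n by omega)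
  rw [← hcount] at hnarayana
  exact_mod_cast hnarayana
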